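/- arXiv:1012.1103 — 2 statements merged into one kernel-verified Lean document; each statement's English description precedes it below -/
import Mathlib

section
/- Let (X,T) be a topological dynamical system and let K ⊆ X be a non-empty compact set. Then the packing topological entropy of K equals the supremum of the measure-theoretical upper entropies over all Borel probability measures giving K full measure: h^P_top(T,K) = sup { h̄_μ(T) : μ a Borel probability measure on X with μ(K) = 1 }. -/
/-! The two inequalities are proved separately.

*Lower bound on the packing entropy* (`upperEntropy_le_packEntropy`). If the integral of the upper
local entropy of `μ` exceeds `s' > s`, then at some scale `ε` a set `A ⊆ K` of positive outer
measure consists of points with `μ (B_n(x, ε)) ≤ exp (-s' n)` for infinitely many `n`. A maximal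
packing of the points satisfying this at a given `n` by closed balls of radius `ε / 3` turns into a
cover by balls of radius `ε`, so every subset of `A` of positive outer measure has infinite packing
sum of exponent `s` (`PpreEps_eq_top_of_measure_pos`). One piece of any countable cover of `K`
meets `A` in such a set, hence the packing measure is infinite.

*Upper bound* (`exists_measure_frequently_le`). Let the packing measure of `K` of exponent `t` be
infinite at scale `ε`, and let `s < t`. Removing from `K` its relatively open part that is
`σ`-finite for exponent `s` leaves a non-empty `K'` with infinite packing sums near each of its
points (`exists_subset_forall_PpreEps_eq_top`). A Joyce–Preiss type mass distribution is built on
`K'`: each atom `x` of the current finitely supported probability is replaced by a finite packing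
of total weight `∑ exp (-s n_y) ≥ 1` very close to `x`, the mass of `x` being shared among the `y`
proportionally to these weights. Since the total weight is at least `1`, the new atoms have mass
at most `exp (-s n_y)` (`Stage.exists_refines`). Atoms of one stage stay separated under
perturbations of a radius that bounds all later displacements, so a Bowen ball of order `n_x` and
radius `ε` about any point near the atom `x` never carries more than `exp (-s n_x)` at later
stages (`Stage.Refines.measure_bowenBall_le`). By the portmanteau theorem a weak-* limit `μ`
inherits this bound: at `μ`-almost every `z`, `μ (B_n(z, ε)) ≤ exp (-s n)` for infinitely many `n`.
Its upper entropy is therefore at least `s`. -/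

open Filter Set MeasureTheory Topology
open scoped ENNReal NNReal

section Core

variable {X : Type*} [MetricSpace X]

/-- The open Bowen ball `B_n(x, ε)` = `{y : d_n(x,y) < ε}` where
`d_n(x,y) = max_{0 ≤ k ≤ n-1} d(T^k x, T^k y)` is the `n`-th Bowen metric. -/
def bowenBall (T : X → X) (x : X) (n : ℕ) (ε : ℝ) : Set X :=
  {y | ∀ k < n, dist (T^[k] x) (T^[k] y) < ε}

/-- The closed Bowen ball `B̄_n(x, ε)` = `{y : d_n(x,y) ≤ ε}`. -/
def bowenClosedBall (T : X → X) (x : X) (n : ℕ) (ε : ℝ) : Set X :=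
  {y | ∀ k < n, dist (T^[k] x) (T^[k] y) ≤ ε}

/-- `M^s_{N,ε}(Z)`: infimum of `Σ_i exp (- s n_i)` over finite or countable families
of open Bowen balls `{B_{n_i}(x_i, ε)}` with `n_i ≥ N` covering `Z`. -/
noncomputable def Mpre (T : X → X) (s : ℝ) (N : ℕ) (ε : ℝ) (Z : Set X) : ℝ≥0∞ :=
  ⨅ (I : Set ℕ) (x : ℕ → X) (n : ℕ → ℕ) (_ : ∀ i ∈ I, N ≤ n i)
    (_ : Z ⊆ ⋃ i ∈ I, bowenBall T (x i) (n i) ε),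
    ∑' i : I, ENNReal.ofReal (Real.exp (-s * n i))

/-- `M^s_ε(Z) = lim_{N → ∞} M^s_{N,ε}(Z)` (the quantity is nondecreasing in `N`). -/
noncomputable def MpreEps (T : X → X) (s : ℝ) (ε : ℝ) (Z : Set X) : ℝ≥0∞ :=
  ⨆ N : ℕ, Mpre T s N ε Z

/-- `M^s(Z) = lim_{ε → 0} M^s_ε(Z)` (the quantity is nondecreasing as `ε` decreases). -/
noncomputable def Mtop (T : X → X) (s : ℝ) (Z : Set X) : ℝ≥0∞ :=
  ⨆ (ε : ℝ) (_ : 0 < ε), MpreEps T s ε Z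

/-- Bowen's topological entropy `h^B_top(T,Z)`: the critical value of `s` at which
`M^s(Z)` jumps from `∞` to `0`. -/
noncomputable def bowenEntropy (T : X → X) (Z : Set X) : ℝ≥0∞ :=
  ⨆ (s : ℝ) (_ : Mtop T s Z = ∞), ENNReal.ofReal s

/-- `P^s_{N,ε}(Z)`: suprema of `Σ_i exp (- s n_i)` over finite or countable pairwise
disjoint families of closed Bowen balls `{B̄_{n_i}(x_i, ε)}` with `x_i ∈ Z`, `n_i ≥ N`. -/
noncomputable def Ppre (T : X → X) (s : ℝ) (N : ℕ) (ε : ℝ) (Z : Set X) : ℝ≥0∞ :=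
  ⨆ (I : Set ℕ) (x : ℕ → X) (n : ℕ → ℕ) (_ : ∀ i ∈ I, x i ∈ Z ∧ N ≤ n i)
    (_ : ∀ i ∈ I, ∀ j ∈ I, i ≠ j →
      Disjoint (bowenClosedBall T (x i) (n i) ε) (bowenClosedBall T (x j) (n j) ε)),
    ∑' i : I, ENNReal.ofReal (Real.exp (-s * n i))

/-- `P^s_ε(Z) = lim_{N → ∞} P^s_{N,ε}(Z)` (the quantity is nonincreasing in `N`). -/
noncomputable def PpreEps (T : X → X) (s : ℝ) (ε : ℝ) (Z : Set X) : ℝ≥0∞ :=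
  ⨅ N : ℕ, Ppre T s N ε Z

/-- `𝒫^s_ε(Z) = inf { Σ_{i} P^s_ε(Z_i) : ⋃_i Z_i ⊇ Z }`. -/
noncomputable def Pouter (T : X → X) (s : ℝ) (ε : ℝ) (Z : Set X) : ℝ≥0∞ :=
  ⨅ (Zs : ℕ → Set X) (_ : Z ⊆ ⋃ i, Zs i), ∑' i, PpreEps T s ε (Zs i)

/-- `h^P_top(T,Z,ε)`: the critical value of `s` at which `𝒫^s_ε(Z)` jumps from `∞` to `0`. -/
noncomputable def packEntropyEps (T : X → X) (ε : ℝ) (Z : Set X) : ℝ≥0∞ :=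
  ⨆ (s : ℝ) (_ : Pouter T s ε Z = ∞), ENNReal.ofReal s

/-- The packing topological entropy `h^P_top(T,Z) = lim_{ε → 0} h^P_top(T,Z,ε)`
(the quantity is nondecreasing as `ε` decreases). -/
noncomputable def packEntropy (T : X → X) (Z : Set X) : ℝ≥0∞ :=
  ⨆ (ε : ℝ) (_ : 0 < ε), packEntropyEps T ε Z

/-- `r_n(Z,ε)`: the largest cardinality of an `(n,ε)`-separated subset of `Z`,
i.e. a set in which distinct points `x, y` satisfy `d_n(x,y) > ε`. -/
noncomputable def maxSep (T : X → X) (Z : Set X) (n : ℕ) (ε : ℝ) : ℝ≥0∞ :=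
  ⨆ (E : Finset X) (_ : ↑E ⊆ Z ∧
    ∀ x ∈ E, ∀ y ∈ E, x ≠ y → ∃ k < n, ε < dist (T^[k] x) (T^[k] y)),
    (E.card : ℝ≥0∞)

/-- Logarithm on `ℝ≥0∞` (with `elog ∞ = ∞`), used for counting quantities. -/
noncomputable def elog (x : ℝ≥0∞) : ℝ≥0∞ :=
  if x = ∞ then ∞ else ENNReal.ofReal (Real.log x.toReal)

/-- The upper capacity topological entropy
`h^{UC}_top(T,Z) = lim_{ε → 0} limsup_{n → ∞} (1/n) log r_n(Z,ε)`. -/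
noncomputable def upcapEntropy (T : X → X) (Z : Set X) : ℝ≥0∞ :=
  ⨆ (ε : ℝ) (_ : 0 < ε), Filter.limsup (fun n : ℕ => elog (maxSep T Z n ε) / n) Filter.atTop

/-- `- log x` as a function `ℝ≥0∞ → ℝ≥0∞` (with `negLog 0 = ∞`), used for measures of balls. -/
noncomputable def negLog (x : ℝ≥0∞) : ℝ≥0∞ :=
  if x = 0 then ∞ else ENNReal.ofReal (-Real.log x.toReal)

variable [MeasurableSpace X]

/-- The lower local entropy `h̲_μ(T,x) = lim_{ε→0} liminf_{n→∞} -(1/n) log μ(B_n(x,ε))`. -/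
noncomputable def lowerLocalEntropy (T : X → X) (μ : Measure X) (x : X) : ℝ≥0∞ :=
  ⨆ (ε : ℝ) (_ : 0 < ε),
    Filter.liminf (fun n : ℕ => negLog (μ (bowenBall T x n ε)) / n) Filter.atTop

/-- The upper local entropy `h̄_μ(T,x) = lim_{ε→0} limsup_{n→∞} -(1/n) log μ(B_n(x,ε))`. -/
noncomputable def upperLocalEntropy (T : X → X) (μ : Measure X) (x : X) : ℝ≥0∞ :=
  ⨆ (ε : ℝ) (_ : 0 < ε),
    Filter.limsup (fun n : ℕ => negLog (μ (bowenBall T x n ε)) / n) Filter.atTop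

/-- The measure-theoretical lower entropy `h̲_μ(T) = ∫ h̲_μ(T,x) dμ(x)`. -/
noncomputable def lowerEntropy (T : X → X) (μ : Measure X) : ℝ≥0∞ :=
  ∫⁻ x, lowerLocalEntropy T μ x ∂μ

/-- The measure-theoretical upper entropy `h̄_μ(T) = ∫ h̄_μ(T,x) dμ(x)`. -/
noncomputable def upperEntropy (T : X → X) (μ : Measure X) : ℝ≥0∞ :=
  ∫⁻ x, upperLocalEntropy T μ x ∂μ

end Core

section Packing

variable {X : Type*} [MetricSpace X]

/-! ### Elementary properties of Bowen balls and packing sums -/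

lemma mem_bowenClosedBall_self (T : X → X) (x : X) (n : ℕ) {ε : ℝ} (hε : 0 ≤ ε) :
    x ∈ bowenClosedBall T x n ε := fun k _ => by simpa using hε

lemma bowenClosedBall_anti (T : X → X) (x : X) (ε : ℝ) {m n : ℕ} (h : m ≤ n) :
    bowenClosedBall T x n ε ⊆ bowenClosedBall T x m ε :=
  fun _ hy k hk => hy k (hk.trans_le h)

lemma isOpen_bowenBall {T : X → X} (hT : Continuous T) (x : X) (n : ℕ) (ε : ℝ) :
    IsOpen (bowenBall T x n ε) := by
  have : bowenBall T x n ε = ⋂ k ∈ Finset.range n, {y | dist (T^[k] x) (T^[k] y) < ε} := by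
    ext y; simp [bowenBall]
  rw [this]
  exact isOpen_biInter_finset fun k _ =>
    isOpen_lt (continuous_const.dist (hT.iterate k)) continuous_const

/-- Packings indexed by an arbitrary countable type bound `Ppre` from below. -/
lemma tsum_le_Ppre {ι : Type*} [Countable ι] (T : X → X) (s : ℝ) (N : ℕ) (ε : ℝ) (Z : Set X)
    (x : ι → X) (n : ι → ℕ) (h1 : ∀ i, x i ∈ Z ∧ N ≤ n i)
    (h2 : ∀ i j, i ≠ j →
      Disjoint (bowenClosedBall T (x i) (n i) ε) (bowenClosedBall T (x j) (n j) ε)) :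
    ∑' i, ENNReal.ofReal (Real.exp (-s * n i)) ≤ Ppre T s N ε Z := by
  rcases isEmpty_or_nonempty ι with hι | hι
  · simp
  obtain ⟨f, hf⟩ := exists_injective_nat ι
  have hg : ∀ i, Function.invFun f (f i) = i := Function.leftInverse_invFun hf
  unfold Ppre
  refine le_iSup_of_le (range f) <| le_iSup_of_le (x ∘ Function.invFun f) <|
    le_iSup_of_le (n ∘ Function.invFun f) <| le_iSup_of_le ?_ <| le_iSup_of_le ?_ ?_
  · rintro _ ⟨i, rfl⟩
    simpa [hg] using h1 i
  · rintro _ ⟨i, rfl⟩ _ ⟨j, rfl⟩ hij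
    simpa [hg] using h2 i j (fun h => hij (by rw [h]))
  · rw [tsum_range (fun k => ENNReal.ofReal (Real.exp (-s * ((n ∘ Function.invFun f) k : ℕ)))) hf]
    simp [hg]

lemma Ppre_anti (T : X → X) (s : ℝ) (ε : ℝ) (Z : Set X) {M N : ℕ} (h : M ≤ N) :
    Ppre T s N ε Z ≤ Ppre T s M ε Z := by
  unfold Ppre
  refine iSup_mono fun I => iSup_mono fun x => iSup_mono fun n => ?_
  exact iSup_mono' fun h1 => ⟨fun i hi => ⟨(h1 i hi).1, h.trans (h1 i hi).2⟩, le_rfl⟩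

lemma Ppre_mono (T : X → X) (s : ℝ) (ε : ℝ) {Z W : Set X} (N : ℕ) (h : Z ⊆ W) :
    Ppre T s N ε Z ≤ Ppre T s N ε W := by
  unfold Ppre
  refine iSup_mono fun I => iSup_mono fun x => iSup_mono fun n => ?_
  exact iSup_mono' fun h1 => ⟨fun i hi => ⟨h (h1 i hi).1, (h1 i hi).2⟩, le_rfl⟩

lemma PpreEps_mono (T : X → X) (s : ℝ) (ε : ℝ) {Z W : Set X} (h : Z ⊆ W) :
    PpreEps T s ε Z ≤ PpreEps T s ε W :=
  iInf_mono fun N => Ppre_mono T s ε N h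

/-- Raising the exponent from `s` to `t` gains a factor `exp (-(t - s) N)` on packings by balls
of order at least `N`. -/
lemma Ppre_le_exp_mul (T : X → X) {s t : ℝ} (hst : s ≤ t) (ε : ℝ) (Z : Set X) (N : ℕ) :
    Ppre T t N ε Z ≤ ENNReal.ofReal (Real.exp (-(t - s) * N)) * Ppre T s N ε Z := by
  rw [Ppre]
  refine iSup_le fun I => iSup_le fun x => iSup_le fun n => iSup_le fun h1 => iSup_le fun h2 => ?_
  have key : ∑' i : I, ENNReal.ofReal (Real.exp (-s * n i)) ≤ Ppre T s N ε Z :=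
    tsum_le_Ppre T s N ε Z (fun i : I => x i) (fun i : I => n i) (fun i => h1 i i.2)
      (fun i j hij => h2 i i.2 j j.2 (fun h => hij (Subtype.ext h)))
  refine le_trans ?_ (mul_le_mul_right key _)
  rw [← ENNReal.tsum_mul_left]
  refine ENNReal.tsum_le_tsum fun i => ?_
  rw [← ENNReal.ofReal_mul (Real.exp_nonneg _), ← Real.exp_add]
  refine ENNReal.ofReal_le_ofReal (Real.exp_le_exp.2 ?_)
  have hn : (N : ℝ) ≤ n i := by exact_mod_cast (h1 i i.2).2
  nlinarith

lemma PpreEps_eq_zero_of_lt (T : X → X) {s t : ℝ} (hst : s < t) (ε : ℝ) (Z : Set X)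
    (h : PpreEps T s ε Z ≠ ∞) : PpreEps T t ε Z = 0 := by
  obtain ⟨N, hN⟩ : ∃ N, Ppre T s N ε Z < ∞ := by
    simpa [PpreEps, iInf_lt_iff] using lt_top_iff_ne_top.2 h
  have hexp : Tendsto (fun M : ℕ => ENNReal.ofReal (Real.exp (-(t - s) * M))) atTop (𝓝 0) := by
    rw [← ENNReal.ofReal_zero]
    refine ENNReal.tendsto_ofReal (Real.tendsto_exp_atBot.comp ?_)
    exact tendsto_natCast_atTop_atTop.const_mul_atTop_of_neg (by linarith)
  have hlim : Tendsto (fun M : ℕ => ENNReal.ofReal (Real.exp (-(t - s) * M)) * Ppre T s N ε Z)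
      atTop (𝓝 0) := by
    simpa using ENNReal.Tendsto.mul_const hexp (Or.inr hN.ne)
  refine le_antisymm (ge_of_tendsto hlim ?_) zero_le
  filter_upwards [eventually_ge_atTop N] with M hM
  exact (iInf_le _ M).trans ((Ppre_le_exp_mul T hst.le ε Z M).trans
    (mul_le_mul_right (Ppre_anti T s ε Z hM) _))

/-! ### Measures of large upper local entropy force infinite packing sums -/

lemma le_exp_of_lt_negLog {a : ℝ≥0∞} (ha : a ≠ ∞) {s : ℝ} {n : ℕ} (hn : 0 < n)
    (h : ENNReal.ofReal s < negLog a / n) : a ≤ ENNReal.ofReal (Real.exp (-s * n)) := by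
  by_cases h0 : a = 0
  · simp [h0]
  have hpos : 0 < a.toReal := ENNReal.toReal_pos h0 ha
  have hn' : (0 : ℝ) < n := by exact_mod_cast hn
  rw [negLog, if_neg h0, ← ENNReal.ofReal_natCast n, ← ENNReal.ofReal_div_of_pos hn',
    ENNReal.ofReal_lt_ofReal_iff'] at h
  have h1 := (lt_div_iff₀ hn').1 h.1
  rw [← ENNReal.ofReal_toReal ha]
  refine ENNReal.ofReal_le_ofReal ?_
  rw [← Real.log_le_iff_le_exp hpos]
  linarith

lemma le_negLog_of_le_exp {a : ℝ≥0∞} {s : ℝ} {n : ℕ} (hn : 0 < n)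
    (h : a ≤ ENNReal.ofReal (Real.exp (-s * n))) : ENNReal.ofReal s ≤ negLog a / n := by
  have hn' : (0 : ℝ) < n := by exact_mod_cast hn
  by_cases h0 : a = 0
  · simp [negLog, h0, ENNReal.top_div]
  have ha : a ≠ ∞ := (h.trans_lt ENNReal.ofReal_lt_top).ne
  have hpos : 0 < a.toReal := ENNReal.toReal_pos h0 ha
  rw [negLog, if_neg h0, ← ENNReal.ofReal_natCast n, ← ENNReal.ofReal_div_of_pos hn']
  refine ENNReal.ofReal_le_ofReal ((le_div_iff₀ hn').2 ?_)
  have h1 : a.toReal ≤ Real.exp (-s * n) :=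
    ENNReal.toReal_le_of_le_ofReal (Real.exp_nonneg _) h
  have h2 := (Real.log_le_iff_le_exp hpos).2 h1
  linarith

lemma negLog_anti {a b : ℝ≥0∞} (hb : b ≠ ∞) (hab : a ≤ b) : negLog b ≤ negLog a := by
  by_cases ha : a = 0
  · simp [negLog, ha]
  have hb0 : b ≠ 0 := fun h => ha (by simpa [h] using hab)
  rw [negLog, negLog, if_neg ha, if_neg hb0]
  refine ENNReal.ofReal_le_ofReal (neg_le_neg ?_)
  exact Real.log_le_log (ENNReal.toReal_pos ha (hab.trans_lt (lt_top_iff_ne_top.2 hb)).ne)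
    (ENNReal.toReal_mono hb hab)

/-- Maximal `n`-packings of `E` by closed Bowen balls of radius `ε / 3` give covers of `E` by open
Bowen balls of radius `ε`. -/
lemma exp_mul_measure_le_Ppre [CompactSpace X] [MeasurableSpace X]
    {T : X → X} (hT : Continuous T) (μ : Measure X) {s s' ε : ℝ} (hε : 0 < ε) (N n : ℕ)
    (hn : N ≤ n) (E : Set X)
    (hE : ∀ x ∈ E, μ (bowenBall T x n ε) ≤ ENNReal.ofReal (Real.exp (-s' * n))) :
    μ E ≤ ENNReal.ofReal (Real.exp (-(s' - s) * n)) * Ppre T s N (ε / 3) E := by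
  obtain ⟨u, huE, hdisj, hu⟩ := Vitali.exists_disjoint_subfamily_covering_enlargement
    (fun x => bowenClosedBall T x n (ε / 3)) E (fun _ => 0) 2 (by norm_num) (by simp) 1
    (by simp) (fun x _ => ⟨x, mem_bowenClosedBall_self T x n (by positivity)⟩)
  have hc : u.Countable := by
    refine (hdisj.mono (g := fun x => bowenBall T x n (ε / 3)) ?_).countable_of_isOpen
      (fun x _ => isOpen_bowenBall hT x n _) (fun x _ => ⟨x, fun k _ => by simp; positivity⟩)
    exact fun x y hy k hk => (hy k hk).le
  have := hc.to_subtype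
  have hcov : E ⊆ ⋃ x ∈ u, bowenBall T x n ε := by
    intro x hx
    obtain ⟨y, hy, ⟨z, hzx, hzy⟩, -⟩ := hu x hx
    refine mem_biUnion hy fun k hk => ?_
    have h1 := hzx k hk
    have h2 := hzy k hk
    have h3 := dist_triangle_right (T^[k] y) (T^[k] x) (T^[k] z)
    linarith
  calc μ E ≤ ∑' x : u, μ (bowenBall T x n ε) :=
        (measure_mono hcov).trans (measure_biUnion_le μ hc _)
    _ ≤ ∑' x : u, ENNReal.ofReal (Real.exp (-(s' - s) * n)) *
          ENNReal.ofReal (Real.exp (-s * n)) := by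
        refine ENNReal.tsum_le_tsum fun x => (hE x (huE x.2)).trans_eq ?_
        rw [← ENNReal.ofReal_mul (Real.exp_nonneg _), ← Real.exp_add]
        ring_nf
    _ ≤ _ := by
        rw [ENNReal.tsum_mul_left]
        refine mul_le_mul_right (tsum_le_Ppre T s N _ E (fun x : u => (x : X)) (fun _ => n)
          (fun x => ⟨huE x.2, hn⟩) ?_) _
        exact fun x y hxy => hdisj x.2 y.2 (fun h => hxy (Subtype.ext h))

/-- The set `E` need not be measurable: only its outer measure enters. -/
lemma PpreEps_eq_top_of_measure_pos [CompactSpace X] [MeasurableSpace X]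
    {T : X → X} (hT : Continuous T) (μ : Measure X) {s s' ε : ℝ} (hss : s < s') (hε : 0 < ε)
    (E : Set X) (hpos : μ E ≠ 0)
    (hE : ∀ x ∈ E, ∃ᶠ n in atTop,
      μ (bowenBall T x n ε) ≤ ENNReal.ofReal (Real.exp (-s' * n))) :
    PpreEps T s (ε / 3) E = ∞ := by
  by_contra hne
  obtain ⟨N, hN⟩ : ∃ N, Ppre T s N (ε / 3) E < ∞ := by
    simpa [PpreEps, iInf_lt_iff] using lt_top_iff_ne_top.2 hne
  set a : ℕ → ℝ≥0∞ := fun n => ENNReal.ofReal (Real.exp (-(s' - s) * n)) with ha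
  have hsum : ∑' n, a n ≠ ∞ := by
    have hs : Summable fun n : ℕ => Real.exp (-(s' - s) * n) := by
      simpa [mul_comm] using Real.summable_exp_nat_mul_iff.2 (show -(s' - s) < 0 by linarith)
    rw [ha, ← ENNReal.ofReal_tsum_of_nonneg (fun n => Real.exp_nonneg _) hs]
    exact ENNReal.ofReal_ne_top
  have hlim : Tendsto (fun M => (∑' k, a (k + M)) * Ppre T s N (ε / 3) E) atTop (𝓝 0) := by
    simpa using ENNReal.Tendsto.mul_const (ENNReal.tendsto_sum_nat_add a hsum) (Or.inr hN.ne)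
  refine hpos (le_antisymm (ge_of_tendsto hlim ?_) zero_le)
  filter_upwards [eventually_ge_atTop N] with M hM
  set En : ℕ → Set X := fun n =>
    {x ∈ E | μ (bowenBall T x n ε) ≤ ENNReal.ofReal (Real.exp (-s' * n))}
  have hcov : E ⊆ ⋃ k, En (k + M) := by
    intro x hx
    obtain ⟨n, hn, hx'⟩ := frequently_atTop.1 (hE x hx) M
    refine mem_iUnion.2 ⟨n - M, ?_⟩
    rw [Nat.sub_add_cancel hn]
    exact ⟨hx, hx'⟩
  rw [← ENNReal.tsum_mul_right]
  refine (measure_mono hcov).trans ((measure_iUnion_le _).trans (ENNReal.tsum_le_tsum fun k => ?_))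
  refine (exp_mul_measure_le_Ppre hT μ (s := s) hε N (k + M) (by omega) (En (k + M))
    (fun x hx => hx.2)).trans (mul_le_mul_right ?_ _)
  exact Ppre_mono T s _ N (fun x hx => hx.1)

lemma upperEntropy_le_packEntropy [CompactSpace X] [MeasurableSpace X]
    {T : X → X} (hT : Continuous T) (K : Set X) (μ : Measure X) [IsProbabilityMeasure μ]
    (hK : ∀ᵐ x ∂μ, x ∈ K) : upperEntropy T μ ≤ packEntropy T K := by
  refine le_of_forall_lt fun c hc => ?_
  obtain ⟨s, hcs, hs⟩ := ENNReal.lt_iff_exists_nnreal_btwn.1 hc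
  obtain ⟨s', hss', hs'⟩ := ENNReal.lt_iff_exists_nnreal_btwn.1 hs
  have hss : (s : ℝ) < s' := by exact_mod_cast hss'
  refine hcs.trans_le ?_
  -- The points of `K` at which the local entropy at scale `1 / (k + 1)` exceeds `s'`.
  set A : ℕ → Set X := fun k => {x ∈ K | (s' : ℝ≥0∞) <
    limsup (fun n : ℕ => negLog (μ (bowenBall T x n (1 / (k + 1 : ℝ)))) / n) atTop}
  obtain ⟨k, hk⟩ : ∃ k, μ (A k) ≠ 0 := by
    by_contra! hall
    have hnull : μ (⋃ k, A k) = 0 := measure_iUnion_null hall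
    refine hs'.not_ge ?_
    have hle : ∀ᵐ x ∂μ, upperLocalEntropy T μ x ≤ s' := by
      filter_upwards [hK, measure_eq_zero_iff_ae_notMem.1 hnull] with x hxK hx
      simp only [A, mem_iUnion, mem_ofPred_eq, not_exists, not_and, not_lt] at hx
      refine iSup₂_le fun ε hε => ?_
      obtain ⟨k, hk⟩ := exists_nat_one_div_lt hε
      refine le_trans (limsup_le_limsup (Eventually.of_forall fun n => ?_)) (hx k hxK)
      refine ENNReal.div_le_div_right (negLog_anti (measure_ne_top _ _) (measure_mono ?_)) _
      exact fun y hy j hj => (hy j hj).trans hk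
    calc upperEntropy T μ ≤ ∫⁻ _, (s' : ℝ≥0∞) ∂μ := lintegral_mono_ae hle
      _ = s' := by simp
  set ε : ℝ := 1 / (k + 1 : ℝ) with hεdef
  have hε : 0 < ε := by positivity
  have hfreq : ∀ x ∈ A k, ∃ᶠ n in atTop,
      μ (bowenBall T x n ε) ≤ ENNReal.ofReal (Real.exp (-(s' : ℝ) * n)) := by
    intro x hx
    refine ((frequently_lt_of_lt_limsup (by isBoundedDefault) hx.2).and_eventually
      (eventually_gt_atTop 0)).mono fun n hn => ?_
    exact le_exp_of_lt_negLog (measure_ne_top _ _) hn.2 (by rw [ENNReal.ofReal_coe_nnreal]; exact hn.1)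
  have htop : Pouter T s (ε / 3) K = ∞ := by
    unfold Pouter
    simp only [iInf_eq_top]
    intro Zs hZs
    obtain ⟨i, hi⟩ : ∃ i, μ (A k ∩ Zs i) ≠ 0 := by
      by_contra! hall
      refine hk (measure_mono_null (fun x hx => ?_) (measure_iUnion_null hall))
      obtain ⟨i, hi⟩ := mem_iUnion.1 (hZs hx.1)
      exact mem_iUnion.2 ⟨i, hx, hi⟩
    have h1 := PpreEps_eq_top_of_measure_pos hT μ hss hε _ hi (fun x hx => hfreq x hx.1)
    refine ENNReal.tsum_eq_top_of_eq_top ⟨i, top_le_iff.1 ?_⟩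
    rw [← h1]
    exact PpreEps_mono T s _ inter_subset_right
  unfold packEntropy packEntropyEps
  refine le_iSup₂_of_le (ε / 3) (by positivity) (le_iSup₂_of_le (s : ℝ) htop ?_)
  simp

/-! ### Localisation: a subset on which packing sums are infinite near every point -/

/-- A set is `σ`-finite for the packing sum of exponent `s` at scale `ε` if countably many sets
of finite packing sum cover it. -/
def PackSigmaFinite (T : X → X) (s ε : ℝ) (Z : Set X) : Prop :=
  ∃ Zs : ℕ → Set X, Z ⊆ ⋃ i, Zs i ∧ ∀ i, PpreEps T s ε (Zs i) ≠ ∞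

lemma PackSigmaFinite.mono {T : X → X} {s ε : ℝ} {Z W : Set X} (hW : PackSigmaFinite T s ε W)
    (h : Z ⊆ W) : PackSigmaFinite T s ε Z :=
  let ⟨Zs, h1, h2⟩ := hW
  ⟨Zs, h.trans h1, h2⟩

lemma PackSigmaFinite.iUnion {T : X → X} {s ε : ℝ} {W : ℕ → Set X}
    (hW : ∀ i, PackSigmaFinite T s ε (W i)) : PackSigmaFinite T s ε (⋃ i, W i) := by
  choose Zs h1 h2 using hW
  refine ⟨fun k => Zs k.unpair.1 k.unpair.2, iUnion_subset fun i x hx => ?_, fun k => h2 _ _⟩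
  obtain ⟨j, hj⟩ := mem_iUnion.1 (h1 i hx)
  exact mem_iUnion.2 ⟨Nat.pair i j, by simpa using hj⟩

lemma PpreEps_empty (T : X → X) (s ε : ℝ) : PpreEps T s ε (∅ : Set X) = 0 := by
  refine le_antisymm ((iInf_le _ 0).trans ?_) zero_le
  unfold Ppre
  refine iSup_le fun I => iSup_le fun x => iSup_le fun n => iSup_le fun h1 => iSup_le fun h2 => ?_
  have : IsEmpty I := ⟨fun i => (h1 i i.2).1⟩
  simp

lemma packSigmaFinite_empty (T : X → X) (s ε : ℝ) : PackSigmaFinite T s ε (∅ : Set X) :=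
  ⟨fun _ => ∅, empty_subset _, fun _ => by simp [PpreEps_empty]⟩

lemma PackSigmaFinite.biUnion {ι : Type*} {T : X → X} {s ε : ℝ} {W : ι → Set X} {t : Set ι}
    (ht : t.Countable) (hW : ∀ i ∈ t, PackSigmaFinite T s ε (W i)) :
    PackSigmaFinite T s ε (⋃ i ∈ t, W i) := by
  rcases t.eq_empty_or_nonempty with rfl | hne
  · simpa using packSigmaFinite_empty T s ε
  obtain ⟨f, rfl⟩ := ht.exists_eq_range hne
  rw [biUnion_range]
  exact PackSigmaFinite.iUnion fun i => hW _ (mem_range_self i)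

lemma PackSigmaFinite.union {T : X → X} {s ε : ℝ} {V W : Set X}
    (hV : PackSigmaFinite T s ε V) (hW : PackSigmaFinite T s ε W) :
    PackSigmaFinite T s ε (V ∪ W) := by
  rw [union_eq_iUnion, ← biUnion_univ]
  exact PackSigmaFinite.biUnion (to_countable _) fun b _ => by cases b <;> assumption

/-- If the packing measure of exponent `t` is infinite, then for `s < t` the set is not
`σ`-finite, and discarding the relatively open `σ`-finite part leaves a non-empty set all of whose
non-empty relatively open subsets have infinite packing sum. -/
lemma exists_subset_forall_PpreEps_eq_top [SecondCountableTopology X] (T : X → X) {s t ε : ℝ}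
    (hst : s < t) (K : Set X) (h : Pouter T t ε K = ∞) :
    ∃ K' ⊆ K, K'.Nonempty ∧
      ∀ x ∈ K', ∀ r > 0, PpreEps T s ε (K' ∩ Metric.ball x r) = ∞ := by
  have hKs : ¬ PackSigmaFinite T s ε K := by
    rintro ⟨Zs, h1, h2⟩
    have h3 : Pouter T t ε K ≤ 0 := by
      refine (iInf₂_le Zs h1).trans_eq ?_
      simp [PpreEps_eq_zero_of_lt T hst ε _ (h2 _)]
    simp [h] at h3
  set K' : Set X := {x ∈ K | ∀ r > 0, ¬ PackSigmaFinite T s ε (K ∩ Metric.ball x r)}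
  have hrest : PackSigmaFinite T s ε (K \ K') := by
    have : ∀ x ∈ K \ K', ∃ r > 0, PackSigmaFinite T s ε (K ∩ Metric.ball x r) := by
      rintro x ⟨hx, hx'⟩
      by_contra! hcon
      exact hx' ⟨hx, hcon⟩
    choose! r hr hsf using this
    obtain ⟨u, hu, huc, hcov⟩ := TopologicalSpace.countable_cover_nhdsWithin
      (s := K \ K') (f := fun x => Metric.ball x (r x))
      (fun x hx => mem_nhdsWithin_of_mem_nhds (Metric.ball_mem_nhds x (hr x hx)))
    refine (PackSigmaFinite.biUnion huc fun x hx => hsf x (hu hx)).mono fun x hx => ?_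
    obtain ⟨y, hy, hxy⟩ := mem_iUnion₂.1 (hcov hx)
    exact mem_iUnion₂.2 ⟨y, hy, hx.1, hxy⟩
  refine ⟨K', fun x hx => hx.1, ?_, fun x hx r hr => ?_⟩
  · by_contra hemp
    rw [not_nonempty_iff_eq_empty] at hemp
    exact hKs (by simpa [hemp] using hrest)
  · by_contra hfin
    refine hx.2 r hr ((PackSigmaFinite.union (V := K' ∩ Metric.ball x r) ?_ hrest).mono ?_)
    · exact ⟨fun _ => K' ∩ Metric.ball x r, subset_iUnion (fun _ : ℕ => K' ∩ Metric.ball x r) 0,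
        fun _ => hfin⟩
    · rintro y ⟨hyK, hyr⟩
      by_cases hy : y ∈ K'
      · exact Or.inl ⟨hy, hyr⟩
      · exact Or.inr ⟨hyK, hy⟩

/-- Infinite packing sums provide finite packings of total weight at least `1`. -/
lemma exists_finset_of_PpreEps_eq_top {T : X → X} {s ε : ℝ} (hε : 0 ≤ ε) {Z : Set X}
    (h : PpreEps T s ε Z = ∞) (N : ℕ) :
    ∃ (E : Finset X) (n : X → ℕ), (∀ y ∈ E, y ∈ Z ∧ N ≤ n y) ∧
      (∀ y ∈ E, ∀ z ∈ E, y ≠ z → z ∉ bowenClosedBall T y (n y) ε) ∧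
      1 ≤ ∑ y ∈ E, ENNReal.ofReal (Real.exp (-s * n y)) := by
  classical
  have h1 : 1 < Ppre T s N ε Z := by
    rw [iInf_eq_top.1 h N]; exact ENNReal.one_lt_top
  simp only [Ppre, lt_iSup_iff] at h1
  obtain ⟨I, x, n, hx, hd, hsum⟩ := h1
  rw [ENNReal.tsum_eq_iSup_sum, lt_iSup_iff] at hsum
  obtain ⟨F, hF⟩ := hsum
  have hinj : Function.Injective (fun i : I => x i) := by
    intro i j hij
    by_contra hne
    refine disjoint_left.1 (hd i i.2 j j.2 (fun h => hne (Subtype.ext h)))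
      (mem_bowenClosedBall_self T _ _ hε) ?_
    simp only at hij
    rw [hij]
    exact mem_bowenClosedBall_self T _ _ hε
  have hnon : Nonempty I := by
    by_contra hemp
    rw [not_nonempty_iff] at hemp
    simp [Finset.eq_empty_of_isEmpty F] at hF
  set g : X → I := Function.invFun (fun i : I => x i)
  have hg : ∀ i : I, g (x i) = i := Function.leftInverse_invFun hinj
  refine ⟨F.image (fun i : I => x i), fun y => n (g y), ?_, ?_, ?_⟩
  · intro y hy
    obtain ⟨i, -, rfl⟩ := Finset.mem_image.1 hy
    simpa [hg] using hx i i.2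
  · intro y hy z hz hyz hmem
    obtain ⟨i, -, rfl⟩ := Finset.mem_image.1 hy
    obtain ⟨j, -, rfl⟩ := Finset.mem_image.1 hz
    simp only [hg] at hmem
    exact disjoint_left.1 (hd i i.2 j j.2 (fun h => hyz (by rw [h]))) hmem
      (mem_bowenClosedBall_self T _ _ hε)
  · rw [Finset.sum_image hinj.injOn]
    simpa [hg] using hF.le

/-! ### Finite stages of the mass distribution -/

/-- A finitely supported probability vector `wt` on a finite set `pts ⊆ K'`, with orders `ord`
and a radius `rad`. The mass of `x` is at most `exp (-s * ord x)`, and distinct points stay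
`(ord x, ε)`-separated when both are moved by at most `rad`. -/
structure Stage (T : X → X) (s ε : ℝ) (K' : Set X) where
  pts : Finset X
  ord : X → ℕ
  wt : X → ℝ≥0∞
  rad : ℝ
  rad_pos : 0 < rad
  pts_sub : ∀ x ∈ pts, x ∈ K'
  sum_wt : ∑ x ∈ pts, wt x = 1
  wt_le : ∀ x ∈ pts, wt x ≤ ENNReal.ofReal (Real.exp (-s * ord x))
  sep : ∀ x ∈ pts, ∀ y ∈ pts, x ≠ y → ∀ z w, dist z x ≤ rad → dist w y ≤ rad →
    w ∉ bowenClosedBall T z (ord x) ε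

/-- `R` refines `S`: each point of `R` has a parent in `S` whose `rad`-ball contains its own,
and the mass of every point of `S` is distributed among its children. -/
def Stage.Refines {T : X → X} {s ε : ℝ} {K' : Set X} (R S : Stage T s ε K') : Prop :=
  ∃ q : X → X, (∀ y ∈ R.pts, q y ∈ S.pts ∧ dist y (q y) + R.rad ≤ S.rad) ∧
    ∀ A : Set X, ∀ [DecidablePred (· ∈ A)],
      ∑ y ∈ R.pts with q y ∈ A, R.wt y = ∑ x ∈ S.pts with x ∈ A, S.wt x

lemma Stage.Refines.refl {T : X → X} {s ε : ℝ} {K' : Set X} (S : Stage T s ε K') :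
    S.Refines S := ⟨id, fun y hy => ⟨hy, by simp⟩, fun A _ => rfl⟩

lemma Stage.Refines.trans {T : X → X} {s ε : ℝ} {K' : Set X} {Q R S : Stage T s ε K'}
    (h1 : Q.Refines R) (h2 : R.Refines S) : Q.Refines S := by
  classical
  obtain ⟨p, hp, hp'⟩ := h1
  obtain ⟨q, hq, hq'⟩ := h2
  refine ⟨q ∘ p, fun y hy => ?_, fun A hA => ?_⟩
  · obtain ⟨h3, h4⟩ := hp y hy
    obtain ⟨h5, h6⟩ := hq _ h3
    refine ⟨h5, ?_⟩
    have := dist_triangle y (p y) (q (p y))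
    simp only [Function.comp_apply]
    linarith
  · letI : DecidablePred (· ∈ q ⁻¹' A) := fun x => hA (q x)
    rw [← hq' A]
    exact hp' (q ⁻¹' A)

/-- Finitely many separation conditions survive small perturbations of the points. -/
lemma exists_sep_radius {T : X → X} (hT : Continuous T) (ε : ℝ) (F : Finset X) (m : X → ℕ)
    (h : ∀ x ∈ F, ∀ y ∈ F, x ≠ y → y ∉ bowenClosedBall T x (m x) ε) {r : ℝ} (hr : 0 < r) :
    ∃ γ > 0, γ ≤ r ∧ ∀ x ∈ F, ∀ y ∈ F, x ≠ y → ∀ z w, dist z x ≤ γ → dist w y ≤ γ →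
      w ∉ bowenClosedBall T z (m x) ε := by
  have key : ∀ x ∈ F, ∀ y ∈ F, ∀ᶠ γ : ℝ in 𝓝[>] 0, x ≠ y → ∀ z w, dist z x ≤ γ → dist w y ≤ γ →
      w ∉ bowenClosedBall T z (m x) ε := by
    intro x hx y hy
    by_cases hxy : x = y
    · simp [hxy]
    have hnot := h x hx y hy hxy
    simp only [bowenClosedBall, mem_ofPred_eq, not_forall, not_le] at hnot
    obtain ⟨k, hk, hlt⟩ := hnot
    have hopen : IsOpen {p : X × X | ε < dist (T^[k] p.1) (T^[k] p.2)} :=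
      isOpen_lt continuous_const
        (((hT.iterate k).comp continuous_fst).dist ((hT.iterate k).comp continuous_snd))
    obtain ⟨δ, hδ, hball⟩ := Metric.isOpen_iff.1 hopen (x, y) hlt
    filter_upwards [Ioo_mem_nhdsGT hδ] with γ hγ _ z w hz hw hmem
    have : (z, w) ∈ Metric.ball (x, y) δ := by
      rw [Metric.mem_ball, Prod.dist_eq]
      exact max_lt (hz.trans_lt hγ.2) (hw.trans_lt hγ.2)
    exact (hball this).not_ge (hmem k hk)
  have key' : ∀ᶠ γ : ℝ in 𝓝[>] 0, ∀ x ∈ F, ∀ y ∈ F, x ≠ y →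
      ∀ z w, dist z x ≤ γ → dist w y ≤ γ → w ∉ bowenClosedBall T z (m x) ε :=
    (Filter.eventually_all_finset F).2 fun x hx =>
      (Filter.eventually_all_finset F).2 fun y hy => key x hx y hy
  obtain ⟨γ, h1, h2⟩ := (key'.and (Ioo_mem_nhdsGT hr)).exists
  exact ⟨γ, h2.1, h2.2.le, h1⟩

lemma Stage.exists_refines {T : X → X} (hT : Continuous T) {s ε : ℝ} (hε : 0 ≤ ε) {K' : Set X}
    (hK' : ∀ x ∈ K', ∀ r > 0, PpreEps T s ε (K' ∩ Metric.ball x r) = ∞)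
    (S : Stage T s ε K') (N : ℕ) :
    ∃ R : Stage T s ε K', R.Refines S ∧ ∀ y ∈ R.pts, N ≤ R.ord y := by
  classical
  have hSr := S.rad_pos
  have hex := fun (x : X) (hx : x ∈ S.pts) =>
    exists_finset_of_PpreEps_eq_top hε (hK' x (S.pts_sub x hx) (S.rad / 2) (by positivity))
      (max N (S.pts.sup S.ord))
  choose! E n hE hsep hsum using hex
  have hdist : ∀ x ∈ S.pts, ∀ y ∈ E x, dist y x < S.rad / 2 :=
    fun x hx y hy => ((hE x hx y hy).1).2
  -- The children sets of distinct points are disjoint, so the parent is well defined.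
  have huniq : ∀ x ∈ S.pts, ∀ x' ∈ S.pts, ∀ y, y ∈ E x → y ∈ E x' → x = x' := by
    intro x hx x' hx' y hy hy'
    by_contra hne
    have h1 := hdist x hx y hy
    have h2 := hdist x' hx' y hy'
    exact S.sep x hx x' hx' hne y y (by linarith) (by linarith)
      (mem_bowenClosedBall_self T y _ hε)
  set F : Finset X := S.pts.biUnion E with hFdef
  have hpar : ∀ y ∈ F, ∃ x ∈ S.pts, y ∈ E x := fun y hy => Finset.mem_biUnion.1 hy
  choose! p hpS hpE using hpar
  have hpeq : ∀ x ∈ S.pts, ∀ y ∈ E x, p y = x := fun x hx y hy =>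
    have hyF : y ∈ F := Finset.mem_biUnion.2 ⟨x, hx, hy⟩
    huniq _ (hpS y hyF) x hx y (hpE y hyF) hy
  set m : X → ℕ := fun y => n (p y) y with hm
  set W : X → ℝ≥0∞ := fun x => ∑ y ∈ E x, ENNReal.ofReal (Real.exp (-s * n x y)) with hW
  have hWtop : ∀ x, W x ≠ ∞ := fun x => by
    simp [hW]
  have hW0 : ∀ x ∈ S.pts, W x ≠ 0 := fun x hx h0 => by
    have := hsum x hx
    simp only [hW] at h0
    rw [h0] at this
    simp at this
  set v : X → ℝ≥0∞ := fun y =>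
    S.wt (p y) * (ENNReal.ofReal (Real.exp (-s * m y)) / W (p y)) with hv
  have hchild : ∀ x ∈ S.pts, ∑ y ∈ E x, v y = S.wt x := by
    intro x hx
    have : ∀ y ∈ E x, v y = S.wt x * (ENNReal.ofReal (Real.exp (-s * n x y)) / W x) := by
      intro y hy
      simp only [hv, hm, hpeq x hx y hy]
    rw [Finset.sum_congr rfl this, ← Finset.mul_sum]
    simp only [div_eq_mul_inv]
    rw [← Finset.sum_mul]
    change S.wt x * (W x * (W x)⁻¹) = _
    rw [ENNReal.mul_inv_cancel (hW0 x hx) (hWtop x), mul_one]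
  have hdisj : (S.pts : Set X).PairwiseDisjoint E := by
    intro x hx x' hx' hne
    exact Finset.disjoint_left.2 fun y hy hy' => hne (huniq x hx x' hx' y hy hy')
  have hmass : ∀ A : Set X, ∀ [DecidablePred (· ∈ A)],
      ∑ y ∈ F with p y ∈ A, v y = ∑ x ∈ S.pts with x ∈ A, S.wt x := by
    intro A _
    rw [Finset.sum_filter, Finset.sum_filter, hFdef, Finset.sum_biUnion hdisj]
    refine Finset.sum_congr rfl fun x hx => ?_
    rw [Finset.sum_congr rfl (g := fun y => if x ∈ A then v y else 0)
      (fun y hy => by rw [hpeq x hx y hy])]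
    split_ifs
    · exact hchild x hx
    · simp
  have hbase : ∀ y ∈ F, ∀ z ∈ F, y ≠ z → z ∉ bowenClosedBall T y (m y) ε := by
    intro y hy z hz hyz hmem
    by_cases hp : p y = p z
    · have hz' := hpE z hz
      rw [← hp] at hz'
      exact hsep (p y) (hpS y hy) y (hpE y hy) z hz' hyz hmem
    · have h1 := hdist _ (hpS y hy) y (hpE y hy)
      have h2 := hdist _ (hpS z hz) z (hpE z hz)
      refine S.sep _ (hpS y hy) _ (hpS z hz) hp y z (by linarith) (by linarith)
        (bowenClosedBall_anti T y ε ?_ hmem)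
      exact (Finset.le_sup (hpS y hy)).trans
        ((le_max_right _ _).trans (hE _ (hpS y hy) y (hpE y hy)).2)
  obtain ⟨γ, hγ, hγr, hγsep⟩ := exists_sep_radius hT ε F m hbase (half_pos hSr)
  have hwt1 : ∀ x ∈ S.pts, S.wt x ≤ 1 := fun x hx => by
    rw [← S.sum_wt]
    exact Finset.single_le_sum (fun _ _ => zero_le) hx
  refine ⟨⟨F, m, v, γ, hγ, fun y hy => (hE _ (hpS y hy) y (hpE y hy)).1.1, ?_, ?_, hγsep⟩,
    ⟨p, fun y hy => ⟨hpS y hy, ?_⟩, hmass⟩, fun y hy => ?_⟩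
  · have := hmass univ
    simpa [S.sum_wt] using this
  · intro y hy
    have h1 : ENNReal.ofReal (Real.exp (-s * m y)) / W (p y) ≤
        ENNReal.ofReal (Real.exp (-s * m y)) :=
      ENNReal.div_le_of_le_mul (le_mul_of_one_le_right zero_le (hsum _ (hpS y hy)))
    calc v y ≤ 1 * ENNReal.ofReal (Real.exp (-s * m y)) := mul_le_mul' (hwt1 _ (hpS y hy)) h1
      _ = _ := one_mul _
  · have h1 := hdist _ (hpS y hy) y (hpE y hy)
    simp only
    linarith
  · exact (le_max_left _ _).trans (hE _ (hpS y hy) y (hpE y hy)).2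

/-- The purely atomic probability measure carried by a stage. -/
noncomputable def Stage.measure [MeasurableSpace X] {T : X → X} {s ε : ℝ} {K' : Set X}
    (S : Stage T s ε K') : Measure X :=
  ∑ x ∈ S.pts, S.wt x • Measure.dirac x

lemma Stage.measure_apply [MeasurableSpace X] {T : X → X} {s ε : ℝ}
    {K' : Set X} (S : Stage T s ε K') {A : Set X} [DecidablePred (· ∈ A)]
    (hA : MeasurableSet A) : S.measure A = ∑ x ∈ S.pts with x ∈ A, S.wt x := by
  rw [Stage.measure, Measure.finsetSum_apply, Finset.sum_filter]
  refine Finset.sum_congr rfl fun x _ => ?_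
  by_cases h : x ∈ A <;> simp [Measure.dirac_apply' _ hA, h]

instance Stage.isProbabilityMeasure [MeasurableSpace X] {T : X → X} {s ε : ℝ}
    {K' : Set X} (S : Stage T s ε K') : IsProbabilityMeasure S.measure := by
  classical
  refine ⟨?_⟩
  rw [S.measure_apply MeasurableSet.univ]
  simpa using S.sum_wt

/-- The `rad`-neighbourhood of a stage; it carries every refinement. -/
def Stage.nbhd {T : X → X} {s ε : ℝ} {K' : Set X} (S : Stage T s ε K') : Set X :=
  ⋃ x ∈ S.pts, Metric.closedBall x S.rad

lemma Stage.isClosed_nbhd {T : X → X} {s ε : ℝ} {K' : Set X} (S : Stage T s ε K') :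
    IsClosed S.nbhd :=
  isClosed_biUnion_finset fun _ _ => Metric.isClosed_closedBall

lemma Stage.Refines.mem_nbhd {T : X → X} {s ε : ℝ} {K' : Set X} {R S : Stage T s ε K'}
    (h : R.Refines S) {y : X} (hy : y ∈ R.pts) : y ∈ S.nbhd := by
  obtain ⟨q, hq, -⟩ := h
  obtain ⟨h1, h2⟩ := hq y hy
  refine mem_iUnion₂.2 ⟨q y, h1, ?_⟩
  have := R.rad_pos
  rw [Metric.mem_closedBall]
  linarith

/-- For `z` within `rad` of `x ∈ pts`, separation confines the Bowen ball of order `ord x` about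
`z` to descendants of `x`, so no refinement gives it mass above `exp (-s * ord x)`. -/
lemma Stage.Refines.measure_bowenBall_le [MeasurableSpace X] [BorelSpace X] {T : X → X}
    (hT : Continuous T) {s ε : ℝ}
    {K' : Set X} {R S : Stage T s ε K'} (h : R.Refines S) {x z : X} (hx : x ∈ S.pts)
    (hz : dist z x ≤ S.rad) :
    R.measure (bowenBall T z (S.ord x) ε) ≤ ENNReal.ofReal (Real.exp (-s * S.ord x)) := by
  classical
  obtain ⟨q, hq, hmass⟩ := h
  rw [R.measure_apply (isOpen_bowenBall hT _ _ _).measurableSet]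
  calc ∑ y ∈ R.pts with y ∈ bowenBall T z (S.ord x) ε, R.wt y
      ≤ ∑ y ∈ R.pts with q y ∈ ({x} : Set X), R.wt y := by
        refine Finset.sum_le_sum_of_subset fun y hy => ?_
        obtain ⟨hyR, hyB⟩ := Finset.mem_filter.1 hy
        refine Finset.mem_filter.2 ⟨hyR, ?_⟩
        obtain ⟨h1, h2⟩ := hq y hyR
        have := R.rad_pos
        by_contra hne
        exact S.sep x hx (q y) h1 (fun h => hne h.symm) z y hz (by linarith)
          fun k hk => (hyB k hk).le
    _ = S.wt x := by
        rw [hmass {x}]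
        simp [Finset.sum_filter, hx]
    _ ≤ _ := S.wt_le x hx

/-! ### The limit measure -/

/-- A weak-* limit of a sequence of refining stages. Only open sets need to be controlled, by the
portmanteau theorem. -/
lemma exists_measure_frequently_le [CompactSpace X] [MeasurableSpace X] [BorelSpace X]
    {T : X → X} (hT : Continuous T) {s t ε : ℝ} (hst : s < t) (hε : 0 ≤ ε)
    {K : Set X} (hK : IsCompact K) (h : Pouter T t ε K = ∞) :
    ∃ μ : Measure X, IsProbabilityMeasure μ ∧ μ K = 1 ∧
      ∀ᵐ z ∂μ, ∃ᶠ n in atTop,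
        μ (bowenBall T z n ε) ≤ ENNReal.ofReal (Real.exp (-s * n)) := by
  classical
  obtain ⟨K', hK'K, ⟨x₀, hx₀⟩, hloc⟩ := exists_subset_forall_PpreEps_eq_top T hst K h
  let S₀ : Stage T s ε K' :=
    { pts := {x₀}, ord := fun _ => 0, wt := fun _ => 1, rad := 1, rad_pos := one_pos
      pts_sub := by simpa using hx₀
      sum_wt := by simp
      wt_le := by simp
      sep := by
        intro x hx y hy hxy
        rw [Finset.mem_singleton] at hx hy
        exact absurd (hx.trans hy.symm) hxy }
  choose next hnext hord using Stage.exists_refines hT hε hloc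
  let S : ℕ → Stage T s ε K' := fun i => Nat.rec S₀ (fun i R => next R i) i
  have hS : ∀ i, S (i + 1) = next (S i) i := fun i => rfl
  have href : ∀ i j, i ≤ j → (S j).Refines (S i) := by
    intro i j hij
    induction j, hij using Nat.le_induction with
    | base => exact Stage.Refines.refl _
    | succ j _ ih => exact (hnext (S j) j).trans ih
  let ν : ℕ → ProbabilityMeasure X := fun i => ⟨(S i).measure, (S i).isProbabilityMeasure⟩
  obtain ⟨μ, -, hμ⟩ := isCompact_univ.ultrafilter_le_nhds
    ((hyperfilter ℕ : Ultrafilter ℕ).map ν) (by simp)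
  have hlim : Tendsto ν (hyperfilter ℕ : Filter ℕ) (𝓝 μ) := hμ
  have hopen : ∀ (G : Set X) (c : ℝ≥0∞), IsOpen G →
      (∀ᶠ j in atTop, (S j).measure G ≤ c) → (μ : Measure X) G ≤ c := by
    intro G c hG hc
    refine (ProbabilityMeasure.le_liminf_measure_open_of_tendsto hlim hG).trans ?_
    refine liminf_le_of_frequently_le' (Eventually.frequently ?_)
    exact Nat.hyperfilter_le_atTop hc
  have hclosed : ∀ C : Set X, IsClosed C → (∀ᶠ j in atTop, ∀ y ∈ (S j).pts, y ∈ C) →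
      (μ : Measure X) Cᶜ = 0 := by
    intro C hC hev
    refine le_antisymm (hopen _ 0 hC.isOpen_compl ?_) zero_le
    filter_upwards [hev] with j hj
    rw [Stage.measure_apply _ hC.isOpen_compl.measurableSet]
    refine (Finset.sum_eq_zero fun y hy => ?_).le
    exact absurd (hj y (Finset.mem_filter.1 hy).1) (Finset.mem_filter.1 hy).2
  refine ⟨μ, inferInstance, ?_, ?_⟩
  · rw [← prob_compl_eq_zero_iff hK.isClosed.measurableSet]
    exact hclosed K hK.isClosed
      (Eventually.of_forall fun j y hy => hK'K ((S j).pts_sub y hy))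
  · have hall : ∀ᵐ z ∂(μ : Measure X), ∀ i, z ∈ (S i).nbhd := by
      rw [ae_all_iff]
      intro i
      refine hclosed _ (S i).isClosed_nbhd ?_
      filter_upwards [eventually_ge_atTop i] with j hj y hy
      exact (href i j hj).mem_nbhd hy
    filter_upwards [hall] with z hz
    refine frequently_atTop.2 fun N => ?_
    obtain ⟨x, hx, hzx⟩ := mem_iUnion₂.1 (hz (N + 1))
    refine ⟨(S (N + 1)).ord x, hord (S N) N x hx, hopen _ _ (isOpen_bowenBall hT _ _ _) ?_⟩
    filter_upwards [eventually_ge_atTop (N + 1)] with j hj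
    exact (href _ j hj).measure_bowenBall_le hT hx hzx

lemma le_upperEntropy_of_frequently_le [MeasurableSpace X] (T : X → X) (μ : Measure X)
    [IsProbabilityMeasure μ] {s ε : ℝ} (hε : 0 < ε)
    (h : ∀ᵐ z ∂μ, ∃ᶠ n in atTop,
      μ (bowenBall T z n ε) ≤ ENNReal.ofReal (Real.exp (-s * n))) :
    ENNReal.ofReal s ≤ upperEntropy T μ := by
  calc ENNReal.ofReal s = ∫⁻ _, ENNReal.ofReal s ∂μ := by simp
    _ ≤ upperEntropy T μ := by
      refine lintegral_mono_ae ?_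
      filter_upwards [h] with z hz
      refine le_iSup₂_of_le ε hε (le_limsup_of_frequently_le' ?_)
      exact (hz.and_eventually (eventually_gt_atTop 0)).mono fun n hn =>
        le_negLog_of_le_exp hn.2 hn.1

end Packing

/-- **Variational principle for packing topological entropy of compact sets**
(Feng–Huang, Theorem 1.3(i)): for a topological dynamical system `(X,T)` and a non-empty
compact set `K ⊆ X`,
`h^P_top(T,K) = sup { h̄_μ(T) : μ a Borel probability measure on X with μ(K) = 1 }`. -/
theorem packEntropy_eq_iSup_upperEntropy
    {X : Type*} [MetricSpace X] [CompactSpace X] [MeasurableSpace X] [BorelSpace X]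
    (T : X → X) (hT : Continuous T) (K : Set X) (hne : K.Nonempty) (hK : IsCompact K) :
    packEntropy T K =
      ⨆ (μ : Measure X) (_ : IsProbabilityMeasure μ) (_ : μ K = 1), upperEntropy T μ := by
  refine le_antisymm ?_ ?_
  · unfold packEntropy packEntropyEps
    refine iSup₂_le fun ε hε => iSup₂_le fun t ht => le_of_forall_lt fun c hc => ?_
    obtain ⟨s, hcs, hst⟩ := ENNReal.lt_iff_exists_nnreal_btwn.1 hc
    have hst' : (s : ℝ) < t := by
      rwa [← ENNReal.ofReal_coe_nnreal, ENNReal.ofReal_lt_ofReal_iff_of_nonneg s.coe_nonneg] at hst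
    obtain ⟨μ, hμ, hμK, hfreq⟩ := exists_measure_frequently_le hT hst' hε.le hK ht
    have h1 := le_upperEntropy_of_frequently_le T μ hε hfreq
    rw [ENNReal.ofReal_coe_nnreal] at h1
    exact hcs.trans_le (h1.trans (le_iSup_of_le μ (le_iSup₂_of_le hμ hμK le_rfl)))
  · refine iSup_le fun μ => iSup₂_le fun hμ hμK => ?_
    exact upperEntropy_le_packEntropy hT K μ
      ((prob_compl_eq_zero_iff hK.isClosed.measurableSet).2 hμK)
end

section
/- Let (X,T) be a topological dynamical system and Z ⊆ X. For any s ≥ 0 and ε, δ > 0, whenever N ∈ ℕ is large enough (e.g. N ≥ 2 with n² e^{−nδ} ≤ 1 for all n ≥ N), one has M^{s+δ}_{N,6ε}(Z) ≤ W^s_{N,ε}(Z) ≤ M^s_{N,ε}(Z). Consequently M^{s+δ}(Z) ≤ W^s(Z) ≤ M^s(Z), and the weighted Bowen topological entropy equals Bowen's topological entropy: h^{WB}_top(T,Z) = h^B_top(T,Z). -/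
/-!
The upper bound `W ≤ M` is the choice of all weights equal to `1`.

For `M^{s+δ}_{N,6ε}(Z) ≤ W^s_{N,ε}(Z)`, fix an admissible weighted family and let `C_n` be the
total weight of its balls of order `n`. Because `∑_{n ≥ 2} n⁻² < 1`, every point of `Z` receives
more than `n⁻²` weight from the balls of some order `n ≥ N`; let `Y_n` be the set of points for
which this happens. A subset of `Y_n` that is `2ε`-separated in the Bowen metric `d_n` meets each
ball of radius `ε` at most once, so double counting shows that it has at most `n² C_n` points
(`card_mul_le`). A subset of maximal cardinality therefore exists, and the balls of radius `2ε ≤ 6ε`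
around its points cover `Y_n` (`exists_finset_cover`). Summing over `n` and using
`n² e^{-nδ} ≤ 1` bounds the cost of the cover of `Z` so obtained by the cost of the weighted
family (`Mpre_le_WpreSet`).

The entropies agree because `M^s(Z) = ∞` forces `W^{s-δ}(Z) = ∞` for every `δ > 0`.
-/

open Filter Set MeasureTheory Topology
open scoped ENNReal NNReal

section Weighted

variable {X : Type*} [MetricSpace X]

/-- `W^s_{N,ε}(f)`: infimum of `Σ_i c_i exp (- s n_i)` over finite or countable families
`{(B_{n_i}(x_i, ε), c_i)}` with `0 < c_i < ∞`, `n_i ≥ N` and `Σ_i c_i χ_{B_{n_i}(x_i,ε)} ≥ f`. -/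
noncomputable def Wpre (T : X → X) (s : ℝ) (N : ℕ) (ε : ℝ) (f : X → ℝ≥0∞) : ℝ≥0∞ :=
  ⨅ (I : Set ℕ) (x : ℕ → X) (n : ℕ → ℕ) (c : ℕ → ℝ≥0∞)
    (_ : ∀ i ∈ I, 0 < c i ∧ c i < ∞ ∧ N ≤ n i)
    (_ : ∀ y : X, f y ≤ ∑' i : I, (bowenBall T (x i) (n i) ε).indicator (fun _ => c i) y),
    ∑' i : I, c i * ENNReal.ofReal (Real.exp (-s * n i))

/-- `W^s_{N,ε}(Z) = W^s_{N,ε}(χ_Z)`. -/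
noncomputable def WpreSet (T : X → X) (s : ℝ) (N : ℕ) (ε : ℝ) (Z : Set X) : ℝ≥0∞ :=
  Wpre T s N ε (Z.indicator 1)

/-- `W^s_ε(Z) = lim_{N → ∞} W^s_{N,ε}(Z)` (nondecreasing in `N`). -/
noncomputable def WpreEps (T : X → X) (s ε : ℝ) (Z : Set X) : ℝ≥0∞ :=
  ⨆ N : ℕ, WpreSet T s N ε Z

/-- `W^s(Z) = lim_{ε → 0} W^s_ε(Z)` (nondecreasing as `ε` decreases). -/
noncomputable def Wtop (T : X → X) (s : ℝ) (Z : Set X) : ℝ≥0∞ :=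
  ⨆ (ε : ℝ) (_ : 0 < ε), WpreEps T s ε Z

/-- The weighted Bowen topological entropy `h^{WB}_top(T,Z)`: the critical value of `s`
at which `W^s(Z)` jumps from `∞` to `0`. -/
noncomputable def weightedBowenEntropy (T : X → X) (Z : Set X) : ℝ≥0∞ :=
  ⨆ (s : ℝ) (_ : Wtop T s Z = ∞), ENNReal.ofReal s

end Weighted

section Helpers

variable {X : Type*} [MetricSpace X]

/-- Covers indexed by an arbitrary countable type may be used to bound `Mpre`. -/
lemma Mpre_le_tsum {ι : Type*} [Countable ι] [Nonempty X] (T : X → X) (s : ℝ) (N : ℕ) (ε : ℝ)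
    (Z : Set X) (x : ι → X) (n : ι → ℕ) (hn : ∀ i, N ≤ n i)
    (hZ : Z ⊆ ⋃ i, bowenBall T (x i) (n i) ε) :
    Mpre T s N ε Z ≤ ∑' i, ENNReal.ofReal (Real.exp (-s * n i)) := by
  obtain ⟨e, he⟩ := exists_injective_nat ι
  have hx : ∀ i, Function.extend e x (fun _ => Classical.arbitrary X) (e i) = x i :=
    fun i => he.extend_apply _ _ _
  have hn' : ∀ i, Function.extend e n (fun _ => 0) (e i) = n i :=
    fun i => he.extend_apply _ _ _
  unfold Mpre
  refine iInf_le_of_le (range e) (iInf_le_of_le (Function.extend e x fun _ => Classical.arbitrary X)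
    (iInf_le_of_le (Function.extend e n fun _ => 0) (iInf_le_of_le ?_ (iInf_le_of_le ?_ ?_))))
  · rintro _ ⟨i, rfl⟩
    rw [hn']
    exact hn i
  · intro z hz
    obtain ⟨i, hi⟩ := mem_iUnion.1 (hZ hz)
    refine mem_iUnion₂.2 ⟨e i, ⟨i, rfl⟩, ?_⟩
    rwa [hx, hn']
  · rw [← (Equiv.ofInjective e he).tsum_eq]
    simp only [Equiv.ofInjective_apply, hn']
    exact le_rfl

lemma Mpre_mono_N (T : X → X) (s : ℝ) {N N' : ℕ} (h : N ≤ N') (ε : ℝ) (Z : Set X) :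
    Mpre T s N ε Z ≤ Mpre T s N' ε Z := by
  unfold Mpre
  refine iInf_mono fun I => iInf_mono fun x => iInf_mono fun n => le_iInf fun h1 => ?_
  exact iInf_le_of_le (fun i hi => h.trans (h1 i hi)) le_rfl

lemma WpreSet_le_Mpre (T : X → X) (s : ℝ) (N : ℕ) (ε : ℝ) (Z : Set X) :
    WpreSet T s N ε Z ≤ Mpre T s N ε Z := by
  unfold WpreSet Wpre Mpre
  refine iInf_mono fun I => iInf_mono fun x => iInf_mono fun n => le_iInf fun h1 =>
    le_iInf fun h2 => iInf_le_of_le (fun _ => 1) (iInf_le_of_le ?_ (iInf_le_of_le ?_ ?_))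
  · exact fun i hi => ⟨one_pos, ENNReal.one_lt_top, h1 i hi⟩
  · intro y
    by_cases hy : y ∈ Z
    · obtain ⟨i, hi, hyi⟩ := mem_iUnion₂.1 (h2 hy)
      refine le_trans ?_ (ENNReal.le_tsum (⟨i, hi⟩ : I))
      simp [hy, hyi]
    · simp [hy]
  · simp

/-- Double counting: if every point of a finite `d_n`-separated set `F` receives weight more than
`τ` from balls of radius `ε`, each of which holds at most one point of `F`, then `|F| τ` is at most
the total weight. -/
lemma card_mul_le {ι : Type*} (T : X → X) (ε : ℝ) (m : ℕ) (x : ι → X) (c : ι → ℝ≥0∞)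
    (τ : ℝ≥0∞) (F : Finset X)
    (hF : ∀ y ∈ F, τ < ∑' i, (bowenBall T (x i) m ε).indicator (fun _ => c i) y)
    (hsep : ∀ y ∈ F, ∀ z ∈ F, y ≠ z → z ∉ bowenBall T y m (2 * ε)) :
    (F.card : ℝ≥0∞) * τ ≤ ∑' i, c i := by
  calc (F.card : ℝ≥0∞) * τ = ∑ y ∈ F, τ := by simp
    _ ≤ ∑ y ∈ F, ∑' i, (bowenBall T (x i) m ε).indicator (fun _ => c i) y :=
        Finset.sum_le_sum fun y hy => (hF y hy).le
    _ = ∑' i, ∑ y ∈ F, (bowenBall T (x i) m ε).indicator (fun _ => c i) y :=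
        (Summable.tsum_finsetSum fun _ _ => ENNReal.summable).symm
    _ ≤ ∑' i, c i := by
        refine ENNReal.tsum_le_tsum fun i => ?_
        by_cases h : ∃ y ∈ F, y ∈ bowenBall T (x i) m ε
        · obtain ⟨y, hy, hyi⟩ := h
          rw [Finset.sum_eq_single_of_mem y hy]
          · exact indicator_le_self' (fun _ _ => zero_le) _
          · intro z hz hzy
            refine indicator_of_notMem (fun hzi => hsep y hy z hz hzy.symm fun k hk => ?_) _
            have h1 := hyi k hk
            have h2 := hzi k hk
            have h3 := dist_triangle_left (T^[k] y) (T^[k] z) (T^[k] (x i))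
            linarith
        · push Not at h
          rw [Finset.sum_eq_zero fun y hy => indicator_of_notMem (h y hy) _]
          exact zero_le

/-- The points receiving weight more than `τ > 0` from a family of balls of order `m` and radius
`ε` with finite total weight are covered by at most `(total weight) / τ` balls of radius `2ε`
centred at such points. -/
lemma exists_finset_cover {ι : Type*} (T : X → X) {ε : ℝ} (hε : 0 < ε) (m : ℕ) (x : ι → X)
    (c : ι → ℝ≥0∞) {τ : ℝ≥0∞} (hτ : τ ≠ 0) (hc : ∑' i, c i ≠ ∞) :
    ∃ F : Finset X,
      (∀ y ∈ F, τ < ∑' i, (bowenBall T (x i) m ε).indicator (fun _ => c i) y) ∧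
      (∀ z, τ < ∑' i, (bowenBall T (x i) m ε).indicator (fun _ => c i) z →
        ∃ y ∈ F, z ∈ bowenBall T y m (2 * ε)) ∧
      (F.card : ℝ≥0∞) * τ ≤ ∑' i, c i := by
  classical
  by_contra hcon
  push Not at hcon
  -- If no separated set were maximal, there would be separated sets of every finite size.
  have key : ∀ k : ℕ, ∃ F : Finset X, F.card = k ∧
      (∀ y ∈ F, τ < ∑' i, (bowenBall T (x i) m ε).indicator (fun _ => c i) y) ∧
      (∀ y ∈ F, ∀ z ∈ F, y ≠ z → z ∉ bowenBall T y m (2 * ε)) := by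
    intro k
    induction k with
    | zero => exact ⟨∅, by simp⟩
    | succ k ih =>
      obtain ⟨F, hk, hF, hsep⟩ := ih
      have hcard := card_mul_le T ε m x c τ F hF hsep
      obtain ⟨z, hz, hzF⟩ : ∃ z, τ < ∑' i, (bowenBall T (x i) m ε).indicator (fun _ => c i) z ∧
          ∀ y ∈ F, z ∉ bowenBall T y m (2 * ε) := by
        by_contra hno
        push Not at hno
        exact absurd hcard (not_le.2 (hcon F hF hno))
      have hzn : z ∉ F := fun h => hzF z h fun j _ => by simpa using hε
      refine ⟨insert z F, by rw [Finset.card_insert_of_notMem hzn, hk], ?_, ?_⟩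
      · intro y hy
        rcases Finset.mem_insert.1 hy with rfl | hy
        exacts [hz, hF y hy]
      · intro y hy w hw hyw
        rcases Finset.mem_insert.1 hy with rfl | hyF
        · rcases Finset.mem_insert.1 hw with rfl | hw
          · exact absurd rfl hyw
          · intro hmem
            exact hzF w hw fun j hj => by rw [dist_comm]; exact hmem j hj
        · rcases Finset.mem_insert.1 hw with rfl | hw
          · exact hzF y hyF
          · exact hsep y hyF w hw hyw
  obtain ⟨k, hk⟩ := ENNReal.exists_nat_mul_gt hτ hc
  obtain ⟨F, rfl, hF, hsep⟩ := key k
  exact absurd (card_mul_le T ε m x c τ F hF hsep) (not_le.2 hk)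

/-- `∑_{n ≥ 2} n⁻² < 1`, in the form needed to pick out a dominant order. -/
lemma exists_inv_sq_lt (a : ℕ → ℝ≥0∞) (h1 : a 1 = 0) (h : 1 ≤ ∑' n, a n) :
    ∃ n : ℕ, ENNReal.ofReal (1 / (n : ℝ) ^ 2) < a n := by
  by_contra hcon
  push Not at hcon
  have hle : ∑' n, (a n + if n = 1 then 1 else 0) ≤ ∑' n : ℕ, ENNReal.ofReal (1 / (n : ℝ) ^ 2) := by
    refine ENNReal.tsum_le_tsum fun n => ?_
    by_cases hn : n = 1
    · subst hn; simp [h1]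
    · simpa [hn] using hcon n
  rw [ENNReal.tsum_add, tsum_ite_eq,
    ← ENNReal.ofReal_tsum_of_nonneg (fun n => by positivity) hasSum_zeta_two.summable,
    hasSum_zeta_two.tsum_eq] at hle
  have h2 : (2 : ℝ≥0∞) ≤ ENNReal.ofReal (Real.pi ^ 2 / 6) := by
    refine le_trans ?_ hle
    rw [← one_add_one_eq_two]
    gcongr
  have h3 : ENNReal.ofReal (Real.pi ^ 2 / 6) < ENNReal.ofReal 2 := by
    rw [ENNReal.ofReal_lt_ofReal_iff two_pos]
    nlinarith [Real.pi_lt_d2, Real.pi_pos]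
  simp only [ENNReal.ofReal_ofNat] at h3
  exact absurd h2 (not_le.2 h3)

lemma Mpre_le_WpreSet (T : X → X) (Z : Set X) (s : ℝ) {ε δ : ℝ} (hε : 0 < ε) (N : ℕ)
    (hN : 2 ≤ N) (hNδ : ∀ n : ℕ, N ≤ n → (n : ℝ) ^ 2 * Real.exp (-(n : ℝ) * δ) ≤ 1) :
    Mpre T (s + δ) N (6 * ε) Z ≤ WpreSet T s N ε Z := by
  classical
  unfold WpreSet Wpre
  refine le_iInf fun I => le_iInf fun x => le_iInf fun n => le_iInf fun c => le_iInf fun h1 =>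
    le_iInf fun h2 => ?_
  have : Nonempty X := ⟨x 0⟩
  by_cases hS : ∑' i : I, c i * ENNReal.ofReal (Real.exp (-s * n i)) = ∞
  · rw [hS]; exact le_top
  -- `w m i` is the weight of the `i`-th ball if that ball has order `m`, and `0` otherwise.
  let w : ℕ → I → ℝ≥0∞ := fun m i => if m = n i then c i else 0
  have hcost : ∑' m : ℕ, (∑' i, w m i) * ENNReal.ofReal (Real.exp (-s * m)) =
      ∑' i : I, c i * ENNReal.ofReal (Real.exp (-s * n i)) := by
    simp_rw [← ENNReal.tsum_mul_right]
    rw [ENNReal.tsum_comm]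
    refine tsum_congr fun i => ?_
    rw [tsum_eq_single (n i) fun m hm => by simp [w, hm]]
    simp [w]
  have hwfin : ∀ m, ∑' i, w m i ≠ ∞ := by
    intro m hm
    refine hS (top_unique ?_)
    rw [← hcost]
    refine le_trans ?_ (ENNReal.le_tsum m)
    rw [hm, ENNReal.top_mul]
    simpa using Real.exp_pos _
  let τ : ℕ → ℝ≥0∞ := fun m => ENNReal.ofReal (1 / (m : ℝ) ^ 2)
  let A : ℕ → X → ℝ≥0∞ := fun m y =>
    ∑' i : I, (bowenBall T (x i) m ε).indicator (fun _ => w m i) y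
  have hA0 : ∀ m < N, ∀ y, A m y = 0 := by
    intro m hm y
    refine ENNReal.tsum_eq_zero.2 fun i => ?_
    have : m ≠ n i := (hm.trans_le (h1 i i.2).2.2).ne
    simp [w, this]
  have hAsum : ∀ y, ∑' m, A m y =
      ∑' i : I, (bowenBall T (x i) (n i) ε).indicator (fun _ => c i) y := by
    intro y
    simp only [A]
    rw [ENNReal.tsum_comm]
    refine tsum_congr fun i => ?_
    rw [tsum_eq_single (n i) fun m hm => by simp [w, hm]]
    simp [w]
  have hex : ∀ m, ∃ F : Finset X, (∀ y ∈ F, N ≤ m) ∧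
      (∀ z, τ m < A m z → ∃ y ∈ F, z ∈ bowenBall T y m (2 * ε)) ∧
      (F.card : ℝ≥0∞) * τ m ≤ ∑' i, w m i := by
    intro m
    by_cases hm : N ≤ m
    · have hτ : τ m ≠ 0 := by
        have : (0 : ℝ) < m := by exact_mod_cast (by omega : 0 < m)
        simp only [τ, ne_eq, ENNReal.ofReal_eq_zero, not_le]
        positivity
      obtain ⟨F, -, hF2, hF3⟩ :=
        exists_finset_cover T hε m (fun i : I => x i) (w m) hτ (hwfin m)
      exact ⟨F, fun _ _ => hm, hF2, hF3⟩
    · refine ⟨∅, by simp, fun z hz => ?_, by simp⟩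
      rw [hA0 m (not_le.1 hm)] at hz
      exact absurd hz not_lt_zero
  choose F hF1 hF2 hF3 using hex
  refine (Mpre_le_tsum (ι := Σ m, F m) T (s + δ) N (6 * ε) Z (fun p => p.2.1) (fun p => p.1)
    (fun p => hF1 p.1 _ p.2.2) ?_).trans ?_
  · intro z hz
    obtain ⟨m, hm⟩ := exists_inv_sq_lt (fun m => A m z) (hA0 1 (by omega) z) (by
      rw [hAsum]
      simpa [hz] using h2 z)
    obtain ⟨y, hy, hzy⟩ := hF2 m z hm
    exact mem_iUnion.2 ⟨⟨m, y, hy⟩, fun k hk => (hzy k hk).trans (by linarith)⟩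
  · rw [← hcost,
      ENNReal.tsum_sigma fun m (_ : F m) => ENNReal.ofReal (Real.exp (-(s + δ) * (m : ℝ)))]
    refine ENNReal.tsum_le_tsum fun m => ?_
    simp only [ENNReal.tsum_const, ENat.card_eq_coe_fintype_card, Fintype.card_coe]
    rcases (F m).eq_empty_or_nonempty with he | ⟨y, hy⟩
    · simp [he]
    have hm := hF1 m y hy
    have hm0 : (0 : ℝ) < m := by exact_mod_cast (by omega : 0 < m)
    have hexp : ENNReal.ofReal (Real.exp (-(s + δ) * m)) ≤
        τ m * ENNReal.ofReal (Real.exp (-s * m)) := by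
      rw [← ENNReal.ofReal_mul (by positivity)]
      refine ENNReal.ofReal_le_ofReal ?_
      rw [show -(s + δ) * m = -(m : ℝ) * δ + -s * m by ring, Real.exp_add]
      gcongr
      rw [le_div_iff₀ (by positivity), mul_comm]
      exact hNδ m hm
    calc _ ≤ ((F m).card : ℝ≥0∞) * (τ m * ENNReal.ofReal (Real.exp (-s * m))) := by
            simpa using mul_le_mul_right hexp ((F m).card : ℝ≥0∞)
      _ ≤ _ := by
            rw [← mul_assoc]
            gcongr
            exact hF3 m

lemma eventually_sq_mul_exp_le {δ : ℝ} (hδ : 0 < δ) :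
    ∃ N₀ : ℕ, ∀ n : ℕ, N₀ ≤ n → (n : ℝ) ^ 2 * Real.exp (-(n : ℝ) * δ) ≤ 1 := by
  have h := (tendsto_rpow_mul_exp_neg_mul_atTop_nhds_zero 2 δ hδ).comp tendsto_natCast_atTop_atTop
  obtain ⟨N₀, h0⟩ := eventually_atTop.1 (h.eventually (ge_mem_nhds one_pos))
  refine ⟨N₀, fun n hn => ?_⟩
  have := h0 n hn
  simp only [Function.comp_apply, Real.rpow_ofNat] at this
  rwa [show -(n : ℝ) * δ = -δ * n by ring]

lemma Mtop_add_le_Wtop (T : X → X) (Z : Set X) (s : ℝ) {δ : ℝ} (hδ : 0 < δ) :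
    Mtop T (s + δ) Z ≤ Wtop T s Z := by
  obtain ⟨N₀, hN₀⟩ := eventually_sq_mul_exp_le hδ
  refine iSup₂_le fun ε hε => iSup_le fun N => ?_
  have hε6 : 0 < ε / 6 := by positivity
  have h := Mpre_le_WpreSet T Z s hε6 (max N (max N₀ 2)) (by simp)
    (fun n hn => hN₀ n (by omega))
  rw [show 6 * (ε / 6) = ε by ring] at h
  exact (Mpre_mono_N T (s + δ) (le_max_left _ _) ε Z).trans <| h.trans <|
    (le_iSup (fun N => WpreSet T s N (ε / 6) Z) _).trans <|
      le_iSup₂ (f := fun ε (_ : 0 < ε) => WpreEps T s ε Z) (ε / 6) hε6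

lemma Wtop_le_Mtop (T : X → X) (Z : Set X) (s : ℝ) : Wtop T s Z ≤ Mtop T s Z :=
  iSup₂_mono fun ε _ => iSup_mono fun N => WpreSet_le_Mpre T s N ε Z

lemma weightedBowenEntropy_eq_bowenEntropy (T : X → X) (Z : Set X) :
    weightedBowenEntropy T Z = bowenEntropy T Z := by
  refine le_antisymm (iSup_mono fun s => iSup_mono' fun h =>
    ⟨top_unique (h ▸ Wtop_le_Mtop T Z s), le_rfl⟩) (iSup₂_le fun s h => ?_)
  -- `W^{s-δ}(Z) = ∞` for every `δ > 0`, and `δ → 0`.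
  have hlim : Tendsto (fun δ : ℝ => ENNReal.ofReal (s - δ)) (𝓝[>] 0) (𝓝 (ENNReal.ofReal s)) := by
    have : Tendsto (fun δ : ℝ => ENNReal.ofReal (s - δ)) (𝓝 0) (𝓝 (ENNReal.ofReal (s - 0))) :=
      (ENNReal.continuous_ofReal.comp (continuous_const.sub continuous_id)).tendsto 0
    rw [sub_zero] at this
    exact this.mono_left nhdsWithin_le_nhds
  refine le_of_tendsto hlim (eventually_nhdsWithin_of_forall fun δ hδ => ?_)
  have hW := Mtop_add_le_Wtop T Z (s - δ) hδ
  rw [sub_add_cancel, h] at hW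
  exact le_iSup₂ (f := fun s (_ : Wtop T s Z = ∞) => ENNReal.ofReal s) (s - δ) (top_unique hW)

end Helpers

/-- **Feng–Huang, Proposition 3.3**: for `Z ⊆ X`, `s ≥ 0` and `ε, δ > 0`, one has
`M^{s+δ}_{N,6ε}(Z) ≤ W^s_{N,ε}(Z) ≤ M^s_{N,ε}(Z)` whenever `N ≥ 2` is large enough that
`n² e^{-nδ} ≤ 1` for all `n ≥ N`.  Consequently `M^{s+δ}(Z) ≤ W^s(Z) ≤ M^s(Z)` and the
weighted Bowen topological entropy coincides with Bowen's topological entropy: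
`h^{WB}_top(T,Z) = h^B_top(T,Z)`. -/
theorem Mpre_le_Wpre_le_Mpre_and_weightedBowenEntropy_eq
    {X : Type*} [MetricSpace X] [CompactSpace X]
    (T : X → X) (hT : Continuous T) (Z : Set X)
    (s : ℝ) (hs : 0 ≤ s) (ε δ : ℝ) (hε : 0 < ε) (hδ : 0 < δ) :
    (∀ N : ℕ, 2 ≤ N → (∀ n : ℕ, N ≤ n → (n : ℝ) ^ 2 * Real.exp (-(n : ℝ) * δ) ≤ 1) →
      Mpre T (s + δ) N (6 * ε) Z ≤ WpreSet T s N ε Z ∧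
        WpreSet T s N ε Z ≤ Mpre T s N ε Z) ∧
    Mtop T (s + δ) Z ≤ Wtop T s Z ∧ Wtop T s Z ≤ Mtop T s Z ∧
    weightedBowenEntropy T Z = bowenEntropy T Z := by
  exact ⟨fun N hN hNδ => ⟨Mpre_le_WpreSet T Z s hε N hN hNδ, WpreSet_le_Mpre T s N ε Z⟩,
    Mtop_add_le_Wtop T Z s hδ, Wtop_le_Mtop T Z s, weightedBowenEntropy_eq_bowenEntropy T Z⟩
end
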